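/- arXiv:2505.11469 — 3 statements merged into one kernel-verified Lean document; each statement's English description precedes it below -/
import Mathlib

section
/- For every integer ℓ ≥ 2, as t → 0⁺ the following four asymptotic equivalences hold (each meaning the ratio of the two sides tends to 1): Z_{ℓ−1}^{[ℓ]}(t) ~ (K_ℓ/(ℓ−1)) · t^{−ℓ+1}, Z_ℓ^{[ℓ]}(t) ~ K_ℓ · t^{−ℓ}, Z_{ℓ+1}^{[ℓ]}(t) ~ ℓ·K_ℓ · t^{−ℓ−1}, and Z_{ℓ+2}^{[ℓ]}(t) ~ ℓ(ℓ+1)·K_ℓ · t^{−ℓ−2}. -/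
open Filter Topology Real MeasureTheory Asymptotics

noncomputable section

/-- Number of joint orbits of the subgroup generated by a tuple of permutations. -/
def kappa {ℓ n : ℕ} (σ : Fin ℓ → Equiv.Perm (Fin n)) : ℕ :=
  Nat.card (MulAction.orbitRel.Quotient (Subgroup.closure (Set.range σ)) (Fin n))

/-- `Acount ℓ n k` is the number of commuting `ℓ`-tuples of permutations of `{1,…,n}`
with exactly `k` joint orbits. -/
def Acount (ℓ n k : ℕ) : ℕ :=
  Nat.card {σ : Fin ℓ → Equiv.Perm (Fin n) //
    (∀ i j, σ i * σ j = σ j * σ i) ∧ kappa σ = k}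

/-- `Hpoly ℓ n x = (1/n!) ∑_k A(ℓ,n,k) x^k`. -/
def Hpoly (ℓ n : ℕ) (x : ℝ) : ℝ :=
  (1 / (n.factorial : ℝ)) * ∑ k ∈ Finset.range (n + 1), (Acount ℓ n k : ℝ) * x ^ k

/-- Expectation, under the Ewens-like measure `P_{ℓ,n,x}`, of `g(K_{ℓ,n})`. -/
def expectK (ℓ n : ℕ) (x : ℝ) (g : ℕ → ℝ) : ℝ :=
  (∑ k ∈ Finset.range (n + 1), g k * (Acount ℓ n k : ℝ) * x ^ k) /
    (∑ k ∈ Finset.range (n + 1), (Acount ℓ n k : ℝ) * x ^ k)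

/-- Mean of `K_{ℓ,n}` under `P_{ℓ,n,x}`. -/
def meanK (ℓ n : ℕ) (x : ℝ) : ℝ := expectK ℓ n x (fun k => (k : ℝ))

/-- Variance of `K_{ℓ,n}` under `P_{ℓ,n,x}`. -/
def varK (ℓ n : ℕ) (x : ℝ) : ℝ :=
  expectK ℓ n x (fun k => ((k : ℝ) - meanK ℓ n x) ^ 2)

/-- Real Riemann zeta values (as a series), `zetaR s = ∑_{m ≥ 1} m^{-s}`. -/
def zetaR (s : ℝ) : ℝ := ∑' m : ℕ, 1 / ((m : ℝ) + 1) ^ s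

/-- The constant `K_ℓ = (ℓ-1)! ζ(2)⋯ζ(ℓ)`. -/
def Kconst (ℓ : ℕ) : ℝ := ((ℓ - 1).factorial : ℝ) * ∏ j ∈ Finset.Icc 2 ℓ, zetaR (j : ℝ)

/-- The multiple series `Z^{[ℓ]}_{α_1,…,α_ℓ}(t)` with complex exponents. -/
def Zc (ℓ : ℕ) (α : Fin ℓ → ℂ) (t : ℝ) : ℂ :=
  ∑' δ : Fin ℓ → ℕ+,
    (∏ i, ((δ i : ℕ) : ℂ) ^ (α i - 1)) *
      Complex.exp (-(((∏ i, ((δ i : ℕ) : ℝ)) * t : ℝ) : ℂ))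

/-- The multiple series `Z^{[ℓ]}_{α_1,…,α_ℓ}(t)` with real exponents. -/
def Zr (ℓ : ℕ) (α : Fin ℓ → ℝ) (t : ℝ) : ℝ :=
  ∑' δ : Fin ℓ → ℕ+,
    (∏ i, ((δ i : ℕ) : ℝ) ^ (α i - 1)) *
      Real.exp (-(∏ i, ((δ i : ℕ) : ℝ)) * t)

/-- The staircase series `Z_m^{[ℓ]}(t) = Z^{[ℓ]}_{m,m-1,…,m-ℓ+1}(t)`. -/
def Zstair (ℓ : ℕ) (m : ℤ) (t : ℝ) : ℝ :=
  Zr ℓ (fun i => (m : ℝ) - (i : ℕ)) t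

/-- The inverse function `(Z_ℓ^{[ℓ]})^{-1} : (0,∞) → (0,∞)`. -/
def ZstairInv (ℓ : ℕ) (u : ℝ) : ℝ :=
  Function.invFunOn (Zstair ℓ ℓ) (Set.Ioi 0) u

/-- The function `q_{ℓ,n}(y,u,θ)` from the saddle point analysis. -/
def qfun (ℓ n : ℕ) (y u θ : ℝ) : ℂ :=
  Complex.I * (n : ℂ) * (θ : ℂ) - (y : ℂ) * ∑' δ : Fin ℓ → ℕ+,
    (∏ i, ((δ i : ℕ) : ℂ) ^ ((ℓ : ℤ) - 2 - (i : ℕ))) *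
      Complex.exp (-(((∏ i, ((δ i : ℕ) : ℝ)) * u : ℝ) : ℂ)) *
      (Complex.exp (Complex.I * (((∏ i, ((δ i : ℕ) : ℝ)) * θ : ℝ) : ℂ)) - 1)

/-- The normalizing sequence `b_n = ((x K_ℓ)^{1/(2ℓ)}/√(ℓ(ℓ-1))) n^{(ℓ-1)/(2ℓ)}`. -/
def bseq (ℓ : ℕ) (x : ℝ) (n : ℕ) : ℝ :=
  (x * Kconst ℓ) ^ ((1 : ℝ) / (2 * (ℓ : ℝ))) / Real.sqrt ((ℓ : ℝ) * ((ℓ : ℝ) - 1)) *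
    (n : ℝ) ^ (((ℓ : ℝ) - 1) / (2 * (ℓ : ℝ)))

/-- The sequence `x_n = x e^{s/b_n}`. -/
def xseq (ℓ : ℕ) (x s : ℝ) (n : ℕ) : ℝ := x * Real.exp (s / bseq ℓ x n)

/-- The saddle point sequence `t_n = (Z_ℓ^{[ℓ]})^{-1}(n/x)`. -/
def tseq (ℓ : ℕ) (x : ℝ) (n : ℕ) : ℝ := ZstairInv ℓ ((n : ℝ) / x)

end

/-- The product of nonnegative convergent series. -/
theorem hasSum_pi_prod : ∀ (n : ℕ) (f : Fin n → ℕ+ → ℝ) (a : Fin n → ℝ),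
    (∀ i d, 0 ≤ f i d) → (∀ i, HasSum (f i) (a i)) →
    HasSum (fun δ : Fin n → ℕ+ => ∏ i, f i (δ i)) (∏ i, a i) := by
  intro n
  induction n with
  | zero =>
    intro f a _ _
    simp
  | succ n ih =>
    intro f a h0 h
    have h1 := ih (fun i => f i.succ) (fun i => a i.succ) (fun i d => h0 _ _) (fun i => h _)
    have hs := Summable.mul_of_nonneg (h 0).summable h1.summable (fun d => h0 0 d)
      (fun δ => Finset.prod_nonneg fun i _ => h0 _ _)
    have h2 := (h 0).mul h1 hs
    rw [← (Fin.consEquiv (fun _ : Fin (n+1) => ℕ+)).hasSum_iff]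
    rw [Fin.prod_univ_succ]
    have e : (fun δ : Fin (n+1) → ℕ+ => ∏ i, f i (δ i)) ∘ (Fin.consEquiv (fun _ : Fin (n+1) => ℕ+)) =
        fun x => f 0 x.1 * ∏ i : Fin n, f i.succ (x.2 i) := by
      funext p
      simp [Fin.consEquiv, Fin.prod_univ_succ]
    rw [e]
    exact h2

/-- One-variable series. -/
noncomputable def Gs (k : ℕ) (s : ℝ) : ℝ := ∑' d : ℕ+, ((d : ℕ) : ℝ) ^ k * Real.exp (-((d : ℕ) : ℝ) * s)

theorem exp_nat_pow (n : ℕ) (s : ℝ) : Real.exp (-(n : ℝ) * s) = Real.exp (-s) ^ n := by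
  rw [← Real.exp_nat_mul]; congr 1; ring

theorem norm_x {s : ℝ} (hs : 0 < s) : ‖Real.exp (-s)‖ < 1 := by
  rw [Real.norm_eq_abs, abs_of_pos (Real.exp_pos _)]
  rw [← Real.exp_zero]; exact Real.exp_lt_exp.2 (by linarith)

theorem Gs_summable_nat (k : ℕ) {s : ℝ} (hs : 0 < s) :
    Summable (fun d : ℕ => (d : ℝ) ^ k * Real.exp (-(d : ℝ) * s)) := by
  simp_rw [exp_nat_pow]
  exact summable_pow_mul_geometric_of_norm_lt_one k (norm_x hs)

theorem Gs_summable (k : ℕ) {s : ℝ} (hs : 0 < s) :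
    Summable (fun d : ℕ+ => ((d : ℕ) : ℝ) ^ k * Real.exp (-((d : ℕ) : ℝ) * s)) :=
  (Gs_summable_nat k hs).comp_injective PNat.coe_injective

theorem Gs_eq (k : ℕ) (s : ℝ) :
    Gs k s = ∑' n : ℕ, ((n : ℝ) + 1) ^ k * Real.exp (-s) ^ (n + 1) := by
  unfold Gs
  rw [← Equiv.pnatEquivNat.symm.tsum_eq]
  congr 1; funext n
  rw [exp_nat_pow]
  simp

theorem Gs_sum' (k : ℕ) {s : ℝ} (hs : 0 < s) :
    Summable (fun n : ℕ => ((n : ℝ) + 1) ^ k * Real.exp (-s) ^ (n + 1)) := by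
  have := (summable_nat_add_iff 1).2 (Gs_summable_nat k hs)
  simp_rw [exp_nat_pow] at this
  simpa using this

theorem choose_hasSum (k : ℕ) {s : ℝ} (hs : 0 < s) :
    HasSum (fun n : ℕ => ((n + k).choose k : ℝ) * Real.exp (-s) ^ n)
      (1 / (1 - Real.exp (-s)) ^ (k + 1)) :=
  hasSum_choose_mul_geometric_of_norm_lt_one k (norm_x hs)

theorem Gs_upper (k : ℕ) {s : ℝ} (hs : 0 < s) :
    Gs k s ≤ k.factorial * Real.exp (-s) * (1 / (1 - Real.exp (-s)) ^ (k + 1)) := by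
  rw [Gs_eq]
  refine hasSum_le ?_ (Gs_sum' k hs).hasSum ((choose_hasSum k hs).mul_left _)
  intro n
  have h : (n + 1) ^ k ≤ k.factorial * (n + k).choose k := by
    rw [← Nat.ascFactorial_eq_factorial_mul_choose]
    exact Nat.pow_succ_le_ascFactorial (n + 1) k
  have h' : ((n : ℝ) + 1) ^ k ≤ k.factorial * (n + k).choose k := by exact_mod_cast h
  calc ((n : ℝ) + 1) ^ k * Real.exp (-s) ^ (n + 1)
      ≤ (k.factorial * (n + k).choose k) * Real.exp (-s) ^ (n + 1) := by gcongr
    _ = _ := by ring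

theorem Gs_lower (k : ℕ) {s : ℝ} (hs : 0 < s) :
    k.factorial * Real.exp (-s) ^ (k + 1) * (1 / (1 - Real.exp (-s)) ^ (k + 1)) ≤ Gs k s := by
  rw [Gs_eq]
  have h0 := (Gs_sum' k hs)
  have h1 : ∑' n : ℕ, (((n + k : ℕ) : ℝ) + 1) ^ k * Real.exp (-s) ^ (n + k + 1) ≤
      ∑' n : ℕ, ((n : ℝ) + 1) ^ k * Real.exp (-s) ^ (n + 1) := by
    rw [← h0.sum_add_tsum_nat_add k]
    have : 0 ≤ ∑ i ∈ Finset.range k, ((i : ℝ) + 1) ^ k * Real.exp (-s) ^ (i + 1) := by positivity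
    linarith
  refine le_trans ?_ h1
  refine hasSum_le ?_ ((choose_hasSum k hs).mul_left _) ((summable_nat_add_iff k).2 h0).hasSum
  intro n
  have h : k.factorial * (n + k).choose k ≤ (n + k + 1) ^ k := by
    rw [← Nat.descFactorial_eq_factorial_mul_choose]
    exact (Nat.descFactorial_le_pow _ _).trans (Nat.pow_le_pow_left (by omega) _)
  have h' : (k.factorial * (n + k).choose k : ℝ) ≤ (((n + k : ℕ) : ℝ) + 1) ^ k := by
    exact_mod_cast h
  calc _ = (k.factorial * (n + k).choose k : ℝ) * Real.exp (-s) ^ (n + k + 1) := by ring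
    _ ≤ _ := by gcongr

/-- Normalised series. -/
noncomputable def Fs (k : ℕ) (s : ℝ) : ℝ := s ^ (k + 1) * Gs k s

theorem Gs_nonneg (k : ℕ) (s : ℝ) : 0 ≤ Gs k s := tsum_nonneg fun d => by positivity

theorem Fs_upper (k : ℕ) {s : ℝ} (hs : 0 < s) :
    Fs k s ≤ k.factorial * Real.exp (-s) * (s / (1 - Real.exp (-s))) ^ (k + 1) := by
  have := mul_le_mul_of_nonneg_left (Gs_upper k hs) (by positivity : 0 ≤ s ^ (k + 1))
  refine this.trans (le_of_eq ?_)
  rw [div_pow]; ring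

theorem Fs_lower (k : ℕ) {s : ℝ} (hs : 0 < s) :
    k.factorial * Real.exp (-s) ^ (k + 1) * (s / (1 - Real.exp (-s))) ^ (k + 1) ≤ Fs k s := by
  have := mul_le_mul_of_nonneg_left (Gs_lower k hs) (by positivity : 0 ≤ s ^ (k + 1))
  refine (le_of_eq ?_).trans this
  rw [div_pow]; ring

theorem Fs_bound (k : ℕ) {s : ℝ} (hs : 0 < s) :
    Fs k s ≤ k.factorial * ((k + 1).factorial * Real.exp 1) := by
  have hx : Real.exp (-s) < 1 := by rw [← Real.exp_zero]; exact Real.exp_lt_exp.2 (by linarith)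
  have h1 : s / (1 - Real.exp (-s)) ≤ 1 + s := by
    rw [div_le_iff₀ (by linarith)]
    have h2 : (1 + s) * Real.exp (-s) ≤ 1 := by
      rw [Real.exp_neg, ← div_eq_mul_inv, div_le_one (Real.exp_pos _)]
      linarith [Real.add_one_le_exp s]
    nlinarith
  have h3 := Real.pow_div_factorial_le_exp (1 + s) (by linarith) (k + 1)
  rw [div_le_iff₀ (by positivity)] at h3
  have h4 : 0 ≤ s / (1 - Real.exp (-s)) := div_nonneg hs.le (by linarith)
  calc Fs k s ≤ _ := Fs_upper k hs
    _ ≤ k.factorial * Real.exp (-s) * (1 + s) ^ (k + 1) := by gcongr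
    _ ≤ k.factorial * Real.exp (-s) * (Real.exp (1 + s) * (k + 1).factorial) := by gcongr
    _ = k.factorial * ((k + 1).factorial * (Real.exp (-s) * Real.exp (1 + s))) := by ring
    _ = _ := by rw [← Real.exp_add]; congr 3; ring

theorem tendsto_quot : Tendsto (fun s : ℝ => s / (1 - Real.exp (-s))) (𝓝[>] 0) (𝓝 1) := by
  have h : HasDerivAt (fun s : ℝ => 1 - Real.exp (-s)) 1 0 := by
    have := ((Real.hasDerivAt_exp (-0)).comp (0:ℝ) (hasDerivAt_neg (0:ℝ))).const_sub 1
    simpa [Function.comp_def] using this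
  have h2 := h.tendsto_slope_zero_right
  have h3 := h2.inv₀ one_ne_zero
  simp only [inv_one] at h3
  refine h3.congr fun s => ?_
  simp [div_eq_mul_inv, mul_comm]

theorem tendsto_expneg : Tendsto (fun s : ℝ => Real.exp (-s)) (𝓝[>] 0) (𝓝 1) := by
  have : Continuous (fun s : ℝ => Real.exp (-s)) := by fun_prop
  have h := this.tendsto 0
  simp only [neg_zero, Real.exp_zero] at h
  exact h.mono_left nhdsWithin_le_nhds

theorem Fs_tendsto (k : ℕ) : Tendsto (Fs k) (𝓝[>] 0) (𝓝 (k.factorial : ℝ)) := by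
  have hl : Tendsto (fun s : ℝ => k.factorial * Real.exp (-s) ^ (k + 1) *
      (s / (1 - Real.exp (-s))) ^ (k + 1)) (𝓝[>] 0) (𝓝 (k.factorial : ℝ)) := by
    have := ((tendsto_expneg.pow (k+1)).const_mul (k.factorial : ℝ)).mul (tendsto_quot.pow (k + 1))
    simpa using this
  have hu : Tendsto (fun s : ℝ => k.factorial * Real.exp (-s) *
      (s / (1 - Real.exp (-s))) ^ (k + 1)) (𝓝[>] 0) (𝓝 (k.factorial : ℝ)) := by
    have := (tendsto_expneg.const_mul (k.factorial : ℝ)).mul (tendsto_quot.pow (k + 1))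
    simpa using this
  refine tendsto_of_tendsto_of_tendsto_of_le_of_le' hl hu ?_ ?_
  · filter_upwards [self_mem_nhdsWithin] with s hs using Fs_lower k hs
  · filter_upwards [self_mem_nhdsWithin] with s hs using Fs_upper k hs

theorem zeta_hasSum (j : ℕ) (hj : 2 ≤ j) :
    HasSum (fun d : ℕ+ => 1 / ((d : ℕ) : ℝ) ^ j) (zetaR (j : ℝ)) := by
  rw [← Equiv.pnatEquivNat.symm.hasSum_iff]
  have h : Summable (fun n : ℕ => 1 / (n : ℝ) ^ j) :=
    Real.summable_one_div_nat_pow.2 (by omega)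
  have h2 := ((summable_nat_add_iff 1).2 h).hasSum
  unfold zetaR
  have e1 : (fun d : ℕ+ => 1 / ((d : ℕ) : ℝ) ^ j) ∘ Equiv.pnatEquivNat.symm =
      fun n : ℕ => 1 / ((n + 1 : ℕ) : ℝ) ^ j := by
    funext n; simp
  have e2 : (fun m : ℕ => 1 / ((m : ℝ) + 1) ^ (j : ℝ)) =
      fun n : ℕ => 1 / ((n + 1 : ℕ) : ℝ) ^ j := by
    funext n; simp
  rw [e1, e2]
  exact h2

theorem zetaR_pos (j : ℕ) (hj : 2 ≤ j) : 0 < zetaR (j : ℝ) := by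
  have h := zeta_hasSum j hj
  rw [← h.tsum_eq]
  exact h.summable.tsum_pos (fun d => by positivity) 1 (by simp)

theorem Pprod_pos {n : ℕ} (δ : Fin n → ℕ+) : 0 < ∏ i, ((δ i : ℕ) : ℝ) :=
  Finset.prod_pos fun i _ => by exact_mod_cast (δ i).pos

/-- weights -/
noncomputable def wt {n : ℕ} (δ : Fin n → ℕ+) : ℝ := ∏ i : Fin n, 1 / ((δ i : ℕ) : ℝ) ^ ((i : ℕ) + 2)

theorem wt_nonneg {n : ℕ} (δ : Fin n → ℕ+) : 0 ≤ wt δ :=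
  Finset.prod_nonneg fun i _ => by positivity

theorem wt_hasSum (n : ℕ) : HasSum (fun δ : Fin n → ℕ+ => wt δ)
    (∏ i : Fin n, zetaR (((i : ℕ) + 2 : ℕ) : ℝ)) :=
  hasSum_pi_prod n (fun i d => 1 / ((d : ℕ) : ℝ) ^ ((i : ℕ) + 2)) _
    (fun i d => by positivity) (fun i => zeta_hasSum _ (by omega))

theorem Zstair_eq (n k : ℕ) {t : ℝ} (ht : 0 < t) :
    Zstair (n + 1) ((k : ℤ) + 1) t * t ^ (k + 1) =
      ∑' δ : Fin n → ℕ+, Fs k ((∏ i, ((δ i : ℕ) : ℝ)) * t) * wt δ := by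
  have hFG : ∀ δ : Fin n → ℕ+, Fs k ((∏ i, ((δ i : ℕ) : ℝ)) * t) * wt δ =
      ((∏ i, ((δ i : ℕ) : ℝ)) ^ (k + 1) * wt δ * Gs k ((∏ i, ((δ i : ℕ) : ℝ)) * t))
        * t ^ (k + 1) := by
    intro δ; unfold Fs; ring
  have hsF : Summable fun δ : Fin n → ℕ+ => Fs k ((∏ i, ((δ i : ℕ) : ℝ)) * t) * wt δ := by
    refine Summable.of_nonneg_of_le (fun δ => ?_) (fun δ => ?_)
      ((wt_hasSum n).summable.mul_left (k.factorial * ((k + 1).factorial * Real.exp 1)))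
    · have := Pprod_pos δ
      exact mul_nonneg (mul_nonneg (by positivity) (Gs_nonneg _ _)) (wt_nonneg δ)
    · exact mul_le_mul_of_nonneg_right (Fs_bound k (mul_pos (Pprod_pos δ) ht)) (wt_nonneg δ)
  have hsG : Summable fun δ : Fin n → ℕ+ =>
      (∏ i, ((δ i : ℕ) : ℝ)) ^ (k + 1) * wt δ * Gs k ((∏ i, ((δ i : ℕ) : ℝ)) * t) := by
    simp_rw [hFG] at hsF
    exact (summable_mul_right_iff (by positivity)).1 hsF
  simp_rw [hFG]
  rw [tsum_mul_right]
  congr 1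
  unfold Zstair Zr
  rw [← (Fin.consEquiv (fun _ : Fin (n+1) => ℕ+)).tsum_eq, ← (Equiv.prodComm _ _).tsum_eq]
  have hterm : ∀ p : (Fin n → ℕ+) × ℕ+,
      (∏ i, ((((Fin.consEquiv (fun _ : Fin (n+1) => ℕ+)) ((Equiv.prodComm _ _) p)) i : ℕ) : ℝ) ^
        (((((k : ℤ) + 1 : ℤ) : ℝ) - (i : ℕ)) - 1)) *
      Real.exp (-(∏ i, ((((Fin.consEquiv (fun _ : Fin (n+1) => ℕ+))
        ((Equiv.prodComm _ _) p)) i : ℕ) : ℝ)) * t) =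
      ((∏ i, ((p.1 i : ℕ) : ℝ)) ^ (k + 1) * wt p.1) * (((p.2 : ℕ) : ℝ) ^ k *
        Real.exp (-((p.2 : ℕ) : ℝ) * ((∏ i, ((p.1 i : ℕ) : ℝ)) * t))) := by
    rintro ⟨δ, d⟩
    have e1 : (∏ i, ((δ i : ℕ) : ℝ)) ^ (k + 1) * wt δ =
        ∏ i : Fin n, ((δ i : ℕ) : ℝ) ^ (((k : ℝ) + 1 - ((i : ℕ) + 1)) - 1) := by
      unfold wt
      rw [← Finset.prod_pow, ← Finset.prod_mul_distrib]
      refine Finset.prod_congr rfl fun i _ => ?_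
      have hp : (0 : ℝ) < ((δ i : ℕ) : ℝ) := by exact_mod_cast (δ i).pos
      rw [← Real.rpow_natCast, ← Real.rpow_natCast, one_div, ← Real.rpow_neg hp.le,
        ← Real.rpow_add hp]
      congr 1; push_cast; ring
    rw [e1]
    simp only [Fin.consEquiv, Equiv.prodComm_apply, Prod.swap_prod_mk, Equiv.coe_fn_mk,
      Fin.prod_univ_succ, Fin.cons_zero, Fin.cons_succ, Fin.val_zero, Fin.val_succ]
    have e2 : ((d : ℕ) : ℝ) ^ ((((k : ℤ) + 1 : ℤ) : ℝ) - ((0 : ℕ) : ℝ) - 1) = ((d : ℕ) : ℝ) ^ k := by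
      rw [← Real.rpow_natCast]; congr 1; push_cast; ring
    rw [e2]
    push_cast
    rw [show -(((d : ℕ) : ℝ) * ∏ i, ((δ i : ℕ) : ℝ)) * t =
      -((d : ℕ) : ℝ) * ((∏ i, ((δ i : ℕ) : ℝ)) * t) by ring]
    ring
  rw [tsum_congr hterm]
  have hin : ∀ δ : Fin n → ℕ+, Summable fun d : ℕ+ =>
      ((∏ i, ((δ i : ℕ) : ℝ)) ^ (k + 1) * wt δ) * (((d : ℕ) : ℝ) ^ k *
        Real.exp (-((d : ℕ) : ℝ) * ((∏ i, ((δ i : ℕ) : ℝ)) * t))) := fun δ =>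
    (Gs_summable k (mul_pos (Pprod_pos δ) ht)).mul_left _
  have hval : ∀ δ : Fin n → ℕ+, ∑' d : ℕ+,
      ((∏ i, ((δ i : ℕ) : ℝ)) ^ (k + 1) * wt δ) * (((d : ℕ) : ℝ) ^ k *
        Real.exp (-((d : ℕ) : ℝ) * ((∏ i, ((δ i : ℕ) : ℝ)) * t))) =
      (∏ i, ((δ i : ℕ) : ℝ)) ^ (k + 1) * wt δ * Gs k ((∏ i, ((δ i : ℕ) : ℝ)) * t) := fun δ =>
    tsum_mul_left
  rw [Summable.tsum_prod]
  · exact tsum_congr hval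
  · rw [summable_prod_of_nonneg]
    · refine ⟨hin, ?_⟩
      exact hsG.congr fun δ => (hval δ).symm
    · rintro ⟨δ, d⟩
      have := Pprod_pos δ
      have := wt_nonneg δ
      simp only [Pi.zero_apply]
      positivity

theorem Zstair_main (n k : ℕ) :
    Tendsto (fun t : ℝ => Zstair (n + 1) ((k : ℤ) + 1) t * t ^ (k + 1)) (𝓝[>] 0)
      (𝓝 (k.factorial * ∏ i : Fin n, zetaR (((i : ℕ) + 2 : ℕ) : ℝ))) := by
  rw [← ((wt_hasSum n).mul_left (k.factorial : ℝ)).tsum_eq]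
  have key : Tendsto (fun t : ℝ => ∑' δ : Fin n → ℕ+, Fs k ((∏ i, ((δ i : ℕ) : ℝ)) * t) * wt δ)
      (𝓝[>] 0) (𝓝 (∑' δ : Fin n → ℕ+, (k.factorial : ℝ) * wt δ)) := by
    refine tendsto_tsum_of_dominated_convergence
      ((wt_hasSum n).summable.mul_left (k.factorial * ((k + 1).factorial * Real.exp 1))) ?_ ?_
    · intro δ
      refine Tendsto.mul_const _ ((Fs_tendsto k).comp ?_)
      refine tendsto_nhdsWithin_iff.2 ⟨?_, ?_⟩
      · have : Continuous fun t : ℝ => (∏ i, ((δ i : ℕ) : ℝ)) * t := by fun_prop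
        have h := this.tendsto 0
        rw [mul_zero] at h
        exact h.mono_left nhdsWithin_le_nhds
      · filter_upwards [self_mem_nhdsWithin] with t ht using mul_pos (Pprod_pos δ) ht
    · filter_upwards [self_mem_nhdsWithin] with t ht δ
      have hp := mul_pos (Pprod_pos δ) ht
      have h0 : 0 ≤ Fs k ((∏ i, ((δ i : ℕ) : ℝ)) * t) :=
        mul_nonneg (by positivity) (Gs_nonneg _ _)
      rw [Real.norm_eq_abs, abs_of_nonneg (mul_nonneg h0 (wt_nonneg δ))]
      exact mul_le_mul_of_nonneg_right (Fs_bound k hp) (wt_nonneg δ)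
  refine key.congr' ?_
  filter_upwards [self_mem_nhdsWithin] with t ht using (Zstair_eq n k ht).symm

theorem zeta_prod_eq (n : ℕ) : ∏ i : Fin n, zetaR (((i : ℕ) + 2 : ℕ) : ℝ) =
    ∏ j ∈ Finset.Icc 2 (n + 1), zetaR (j : ℝ) := by
  rw [Fin.prod_univ_eq_prod_range (fun i => zetaR ((i + 2 : ℕ) : ℝ)) n]
  rw [← Finset.Ico_add_one_right_eq_Icc, Finset.prod_Ico_eq_prod_range]
  refine Finset.prod_congr (by simp) fun i _ => ?_
  rw [add_comm]

theorem Zstair_ratio (ℓ k : ℕ) (hℓ : 2 ≤ ℓ) (c e : ℝ) (m : ℤ) (hm : m = (k : ℤ) + 1)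
    (he : e = -((k + 1 : ℕ) : ℝ))
    (hc : c = k.factorial * ∏ j ∈ Finset.Icc 2 ℓ, zetaR (j : ℝ)) :
    Tendsto (fun t : ℝ => Zstair ℓ m t / (c * t ^ e)) (𝓝[>] 0) (𝓝 1) := by
  obtain ⟨n, rfl⟩ : ∃ n, ℓ = n + 1 := ⟨ℓ - 1, by omega⟩
  subst hm he
  have hc0 : c ≠ 0 := by
    rw [hc]
    refine mul_ne_zero (by positivity) (Finset.prod_ne_zero_iff.2 fun j hj => ?_)
    exact (zetaR_pos j (Finset.mem_Icc.1 hj).1).ne'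
  have h := Zstair_main n k
  rw [zeta_prod_eq, ← hc] at h
  have h2 := h.div_const c
  rw [div_self hc0] at h2
  refine h2.congr' ?_
  filter_upwards [self_mem_nhdsWithin] with t ht
  have ht' : (0 : ℝ) < t := ht
  rw [Real.rpow_neg ht'.le, Real.rpow_natCast]
  field_simp

/-- the four staircase asymptotics as `t → 0⁺`:
`Z_{ℓ-1}^{[ℓ]}(t) ~ (K_ℓ/(ℓ-1)) t^{-ℓ+1}`, `Z_ℓ^{[ℓ]}(t) ~ K_ℓ t^{-ℓ}`,
`Z_{ℓ+1}^{[ℓ]}(t) ~ ℓ K_ℓ t^{-ℓ-1}`, `Z_{ℓ+2}^{[ℓ]}(t) ~ ℓ(ℓ+1) K_ℓ t^{-ℓ-2}`. -/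
theorem Zstair_asymptotics (ℓ : ℕ) (hℓ : 2 ≤ ℓ) :
    Tendsto (fun t : ℝ =>
        Zstair ℓ ((ℓ : ℤ) - 1) t / (Kconst ℓ / ((ℓ : ℝ) - 1) * t ^ (-(ℓ : ℝ) + 1)))
      (nhdsWithin 0 (Set.Ioi 0)) (nhds 1) ∧
    Tendsto (fun t : ℝ =>
        Zstair ℓ (ℓ : ℤ) t / (Kconst ℓ * t ^ (-(ℓ : ℝ))))
      (nhdsWithin 0 (Set.Ioi 0)) (nhds 1) ∧
    Tendsto (fun t : ℝ =>
        Zstair ℓ ((ℓ : ℤ) + 1) t / ((ℓ : ℝ) * Kconst ℓ * t ^ (-(ℓ : ℝ) - 1)))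
      (nhdsWithin 0 (Set.Ioi 0)) (nhds 1) ∧
    Tendsto (fun t : ℝ =>
        Zstair ℓ ((ℓ : ℤ) + 2) t /
          ((ℓ : ℝ) * ((ℓ : ℝ) + 1) * Kconst ℓ * t ^ (-(ℓ : ℝ) - 2)))
      (nhdsWithin 0 (Set.Ioi 0)) (nhds 1) := by 
  obtain ⟨n, rfl⟩ : ∃ n, ℓ = n + 2 := ⟨ℓ - 2, by omega⟩
  have hf : ∀ k : ℕ, ((k + 1).factorial : ℝ) = ((k : ℝ) + 1) * k.factorial := fun k => by
    rw [Nat.factorial_succ]; push_cast; ring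
  refine ⟨Zstair_ratio _ n hℓ _ _ _ ?_ ?_ ?_, Zstair_ratio _ (n + 1) hℓ _ _ _ ?_ ?_ ?_,
    Zstair_ratio _ (n + 2) hℓ _ _ _ ?_ ?_ ?_, Zstair_ratio _ (n + 3) hℓ _ _ _ ?_ ?_ ?_⟩
  · push_cast; ring
  · push_cast; ring
  · unfold Kconst
    rw [show n + 2 - 1 = n + 1 by omega, hf]
    push_cast
    have : (n : ℝ) + 2 - 1 ≠ 0 := by
      have : (0 : ℝ) ≤ n := by positivity
      linarith
    field_simp
    ring
  · push_cast; ring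
  · push_cast; ring
  · unfold Kconst
    rw [show n + 2 - 1 = n + 1 by omega]
  · push_cast; ring
  · push_cast; ring
  · unfold Kconst
    rw [show n + 2 - 1 = n + 1 by omega, hf (n + 1)]
    push_cast
    ring
  · push_cast; ring
  · push_cast; ring
  · unfold Kconst
    rw [show n + 2 - 1 = n + 1 by omega, hf (n + 2), hf (n + 1)]
    push_cast
    ring
end

section
/- Let ℓ ≥ 2 be an integer and let z be a complex number with |z| < 1. Then the series L_ℓ(z) := −Σ_{δ_1,…,δ_{ℓ−1} = 1}^{∞} δ_1^{ℓ−2} δ_2^{ℓ−3} ⋯ δ_{ℓ−2} · Log(1 − z^{δ_1⋯δ_{ℓ−1}}) converges absolutely (where Log is the principal branch of the complex logarithm), and it equals the absolutely convergent series Σ_{δ_1,…,δ_ℓ = 1}^{∞} δ_1^{ℓ−2} δ_2^{ℓ−3} ⋯ δ_{ℓ−2} · δ_ℓ^{−1} · z^{δ_1⋯δ_ℓ}. Moreover, for every x > 0 the infinite product Π_{δ_1,…,δ_{ℓ−1} = 1}^{∞} (1 − z^{δ_1⋯δ_{ℓ−1}})^{−x δ_1^{ℓ−2} δ_2^{ℓ−3}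 ⋯ δ_{ℓ−2}} converges absolutely, in the sense that Σ_{δ_1,…,δ_{ℓ−1}} |(1 − z^{δ_1⋯δ_{ℓ−1}})^{−x δ_1^{ℓ−2}⋯δ_{ℓ−2}} − 1| < ∞, and the product equals exp(x·L_ℓ(z)). -/
open Filter Topology Real MeasureTheory Asymptotics

theorem aux_summable_inv_sq (m : ℕ) :
    Summable (fun δ : Fin m → ℕ+ => ∏ i, (1 / ((δ i : ℕ) : ℝ) ^ 2)) := by
  induction m with
  | zero => exact Summable.of_finite
  | succ m ih =>
    have h1 : Summable (fun k : ℕ+ => 1 / ((k : ℕ) : ℝ) ^ 2) :=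
      (Real.summable_one_div_nat_pow.2 (by norm_num : 1 < 2)).comp_injective PNat.coe_injective
    have h2 := h1.mul_of_nonneg ih (fun k => by positivity) (fun δ => by positivity)
    rw [← (Fin.snocEquiv (fun _ : Fin (m + 1) => ℕ+)).summable_iff]
    refine h2.congr fun p => ?_
    simp [Fin.snocEquiv, Fin.prod_univ_castSucc, mul_comm]

theorem aux_bound (k : ℕ) {r : ℝ} (hr : 0 ≤ r) (h1 : r < 1) :
    ∃ C : ℝ, ∀ n : ℕ, 1 ≤ n → (n : ℝ) ^ k * r ^ n ≤ C * (1 / (n : ℝ) ^ 2) := by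
  obtain ⟨C, hC⟩ := (tendsto_pow_const_mul_const_pow_of_lt_one (k + 2) hr h1).bddAbove_range
  refine ⟨C, fun n hn => ?_⟩
  have h := hC ⟨n, rfl⟩
  have hn' : (0 : ℝ) < n := by exact_mod_cast hn
  rw [mul_one_div, le_div_iff₀ (by positivity)]
  calc _ = (n : ℝ) ^ (k + 2) * r ^ n := by ring
    _ ≤ C := h

theorem aux_summable (m : ℕ) (e : Fin m → ℤ) (K : ℕ) (he : ∀ i, e i ≤ K) (z : ℂ) (hz : ‖z‖ < 1) :
    Summable (fun δ : Fin m → ℕ+ =>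
      ‖(∏ i, ((δ i : ℕ) : ℂ) ^ (e i)) * z ^ (∏ i, (δ i : ℕ))‖) := by
  obtain ⟨C, hC⟩ := aux_bound K (norm_nonneg z) hz
  refine Summable.of_nonneg_of_le (fun _ => norm_nonneg _) (fun δ => ?_)
    ((aux_summable_inv_sq m).mul_left C)
  have hP : 1 ≤ ∏ i, (δ i : ℕ) := Finset.one_le_prod' fun i _ => (δ i).one_le
  have h := hC _ hP
  have h2 : ∏ i, (1 / ((δ i : ℕ) : ℝ) ^ 2) = 1 / ((∏ i, (δ i : ℕ) : ℕ) : ℝ) ^ 2 := by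
    push_cast
    simp [Finset.prod_inv_distrib, Finset.prod_pow]
  rw [h2]
  refine le_trans ?_ h
  rw [norm_mul, norm_pow, norm_prod]
  gcongr
  push_cast
  rw [← Finset.prod_pow]
  refine Finset.prod_le_prod (fun _ _ => norm_nonneg _) fun i _ => ?_
  rw [norm_zpow, Complex.norm_natCast, ← zpow_natCast]
  exact zpow_le_zpow_right₀ (by exact_mod_cast (δ i).one_le) (he i)

theorem aux_core (m : ℕ) (z : ℂ) (hz : ‖z‖ < 1) :
    Summable (fun δ : Fin m → ℕ+ =>
      ‖(∏ i, ((δ i : ℕ) : ℂ) ^ (((m + 1 : ℕ) : ℤ) - 2 - (i : ℕ))) *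
        Complex.log (1 - z ^ (∏ i, (δ i : ℕ)))‖) ∧
    Summable (fun δ : Fin (m + 1) → ℕ+ =>
      ‖(∏ i, ((δ i : ℕ) : ℂ) ^ (((m + 1 : ℕ) : ℤ) - 2 - (i : ℕ))) * z ^ (∏ i, (δ i : ℕ))‖) ∧
    -(∑' δ : Fin m → ℕ+,
        (∏ i, ((δ i : ℕ) : ℂ) ^ (((m + 1 : ℕ) : ℤ) - 2 - (i : ℕ))) *
          Complex.log (1 - z ^ (∏ i, (δ i : ℕ)))) =
      ∑' δ : Fin (m + 1) → ℕ+,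
        (∏ i, ((δ i : ℕ) : ℂ) ^ (((m + 1 : ℕ) : ℤ) - 2 - (i : ℕ))) * z ^ (∏ i, (δ i : ℕ)) ∧
    ∀ x : ℝ, 0 < x →
      Summable (fun δ : Fin m → ℕ+ =>
        ‖(1 - z ^ (∏ i, (δ i : ℕ))) ^
            (-(x : ℂ) * ∏ i, ((δ i : ℕ) : ℂ) ^ (((m + 1 : ℕ) : ℤ) - 2 - (i : ℕ))) - 1‖) ∧
      (∏' δ : Fin m → ℕ+,
          (1 - z ^ (∏ i, (δ i : ℕ))) ^
            (-(x : ℂ) * ∏ i, ((δ i : ℕ) : ℂ) ^ (((m + 1 : ℕ) : ℤ) - 2 - (i : ℕ)))) =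
        Complex.exp ((x : ℂ) *
          -(∑' δ : Fin m → ℕ+,
              (∏ i, ((δ i : ℕ) : ℂ) ^ (((m + 1 : ℕ) : ℤ) - 2 - (i : ℕ))) *
                Complex.log (1 - z ^ (∏ i, (δ i : ℕ))))) := by
  have hS2 := aux_summable (m + 1) (fun i => ((m + 1 : ℕ) : ℤ) - 2 - (i : ℕ)) (m + 1)
    (fun i => by push_cast; omega) z hz
  set w : (Fin m → ℕ+) → ℂ :=
    fun δ => ∏ i, ((δ i : ℕ) : ℂ) ^ (((m + 1 : ℕ) : ℤ) - 2 - (i : ℕ)) with hw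
  set P : (Fin m → ℕ+) → ℕ := fun δ => ∏ i, (δ i : ℕ) with hP
  have hP1 : ∀ δ, 1 ≤ P δ := fun δ => Finset.one_le_prod' fun i _ => (δ i).one_le
  have hzP : ∀ δ, ‖z ^ P δ‖ < 1 := fun δ => by
    rw [norm_pow]
    exact pow_lt_one₀ (norm_nonneg _) hz (by have := hP1 δ; omega)
  let E : (Fin m → ℕ+) × ℕ+ ≃ (Fin (m + 1) → ℕ+) :=
    (Equiv.prodComm _ _).trans (Fin.snocEquiv (fun _ : Fin (m + 1) => ℕ+))
  let F : (Fin (m + 1) → ℕ+) → ℂ := fun δ =>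
    (∏ i, ((δ i : ℕ) : ℂ) ^ (((m + 1 : ℕ) : ℤ) - 2 - (i : ℕ))) * z ^ (∏ i, (δ i : ℕ))
  have hF : ∀ p : (Fin m → ℕ+) × ℕ+,
      F (E p) = w p.1 * ((z ^ P p.1) ^ (p.2 : ℕ) / ((p.2 : ℕ) : ℂ)) := by
    intro p
    have : ((m + 1 : ℕ) : ℤ) - 2 - (m : ℕ) = -1 := by push_cast; ring
    simp only [F, E, Fin.snocEquiv, Fin.prod_univ_castSucc, Equiv.trans_apply,
      Equiv.prodComm_apply, Equiv.coe_fn_mk, Fin.snoc_castSucc, Fin.snoc_last, Prod.fst_swap,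
      Prod.snd_swap, Fin.val_castSucc, Fin.val_last, this, zpow_neg_one, pow_mul, hw, hP]
    ring
  have hsum : Summable (fun p : (Fin m → ℕ+) × ℕ+ => ‖F (E p)‖) :=
    (E.summable_iff (f := fun δ => ‖F δ‖)).2 hS2
  have hinner : ∀ δ, HasSum (fun k : ℕ+ => F (E (δ, k))) (-(w δ * Complex.log (1 - z ^ P δ))) := by
    intro δ
    have h := Complex.hasSum_taylorSeries_neg_log (hzP δ)
    have h' : HasSum (fun k : ℕ+ => (z ^ P δ) ^ (k : ℕ) / ((k : ℕ) : ℂ))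
        (-Complex.log (1 - z ^ P δ)) :=
      (hasSum_pnat_iff (f := fun n : ℕ => (z ^ P δ) ^ n / (n : ℂ))).2 (by simpa using h)
    have h'' := h'.mul_left (w δ)
    rw [mul_neg] at h''
    simpa only [hF] using h''
  have hS1 : Summable (fun δ => ‖w δ * Complex.log (1 - z ^ P δ)‖) := by
    refine Summable.of_nonneg_of_le (fun _ => norm_nonneg _) (fun δ => ?_) hsum.prod
    rw [← norm_neg, ← (hinner δ).tsum_eq]
    exact norm_tsum_le_tsum_norm (hsum.prod_factor δ)
  refine ⟨hS1, hS2, ?_, fun x hx => ?_⟩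
  · rw [← tsum_neg]
    change _ = ∑' δ, F δ
    rw [← E.tsum_eq F, hsum.of_norm.tsum_prod]
    exact tsum_congr fun δ => (hinner δ).tsum_eq.symm
  · have hne : ∀ δ, 1 - z ^ P δ ≠ 0 := fun δ h => by
      have h1 := hzP δ
      rw [← sub_eq_zero.1 h] at h1
      simp at h1
    have hpow : ∀ δ, (1 - z ^ P δ) ^ (-(x : ℂ) * w δ) =
        Complex.exp ((x : ℂ) * -(w δ * Complex.log (1 - z ^ P δ))) := fun δ => by
      rw [Complex.cpow_def_of_ne_zero (hne δ)]
      congr 1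
      ring
    have ha := (hS1.of_norm.hasSum.neg.mul_left (x : ℂ))
    constructor
    · change Summable (fun δ => ‖(1 - z ^ P δ) ^ (-(x : ℂ) * w δ) - 1‖)
      simp only [hpow]
      have hn : Summable (fun δ => ‖(x : ℂ) * -(w δ * Complex.log (1 - z ^ P δ))‖) := by
        simpa only [norm_mul, norm_neg] using hS1.mul_left ‖(x : ℂ)‖
      refine Summable.of_norm_bounded_eventually (hn.mul_left 2) ?_
      filter_upwards [hn.tendsto_cofinite_zero.eventually_le_const one_pos] with δ hδ
      rw [norm_norm]
      exact Complex.norm_exp_sub_one_le hδ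
    · change ∏' δ, (1 - z ^ P δ) ^ (-(x : ℂ) * w δ) = _
      simp only [hpow]
      exact ha.cexp.tprod_eq

/-- absolute convergence of the two series for `L_ℓ(z)`, their equality, and
absolute convergence and value of the Bryan–Fulman infinite product. -/
theorem bryan_fulman_product (ℓ : ℕ) (hℓ : 2 ≤ ℓ) (z : ℂ) (hz : ‖z‖ < 1) :
    Summable (fun δ : Fin (ℓ - 1) → ℕ+ =>
      ‖(∏ i, ((δ i : ℕ) : ℂ) ^ ((ℓ : ℤ) - 2 - (i : ℕ))) *
        Complex.log (1 - z ^ (∏ i, (δ i : ℕ)))‖) ∧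
    Summable (fun δ : Fin ℓ → ℕ+ =>
      ‖(∏ i, ((δ i : ℕ) : ℂ) ^ ((ℓ : ℤ) - 2 - (i : ℕ))) * z ^ (∏ i, (δ i : ℕ))‖) ∧
    -(∑' δ : Fin (ℓ - 1) → ℕ+,
        (∏ i, ((δ i : ℕ) : ℂ) ^ ((ℓ : ℤ) - 2 - (i : ℕ))) *
          Complex.log (1 - z ^ (∏ i, (δ i : ℕ)))) =
      ∑' δ : Fin ℓ → ℕ+,
        (∏ i, ((δ i : ℕ) : ℂ) ^ ((ℓ : ℤ) - 2 - (i : ℕ))) * z ^ (∏ i, (δ i : ℕ)) ∧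
    ∀ x : ℝ, 0 < x →
      Summable (fun δ : Fin (ℓ - 1) → ℕ+ =>
        ‖(1 - z ^ (∏ i, (δ i : ℕ))) ^
            (-(x : ℂ) * ∏ i, ((δ i : ℕ) : ℂ) ^ ((ℓ : ℤ) - 2 - (i : ℕ))) - 1‖) ∧
      (∏' δ : Fin (ℓ - 1) → ℕ+,
          (1 - z ^ (∏ i, (δ i : ℕ))) ^
            (-(x : ℂ) * ∏ i, ((δ i : ℕ) : ℂ) ^ ((ℓ : ℤ) - 2 - (i : ℕ)))) =
        Complex.exp ((x : ℂ) *
          -(∑' δ : Fin (ℓ - 1) → ℕ+,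
              (∏ i, ((δ i : ℕ) : ℂ) ^ ((ℓ : ℤ) - 2 - (i : ℕ))) *
                Complex.log (1 - z ^ (∏ i, (δ i : ℕ))))) := by 
  obtain ⟨m, rfl⟩ : ∃ m, ℓ = m + 1 := ⟨ℓ - 1, by omega⟩
  exact aux_core m z hz
end

section
/- Let ℓ ≥ 2 be an integer, let x > 0 and s ∈ ℝ, let b_n := ((x·K_ℓ)^{1/(2ℓ)}/√(ℓ(ℓ−1))) · n^{(ℓ−1)/(2ℓ)}, x_n := x·e^{s/b_n}, and t_n := (Z_ℓ^{[ℓ]})^{−1}(n/x). Then there exists a constant η > 0 such that for all sufficiently large n (in particular with t_n < π) and all θ with t_n < |θ| < π, Re q_{ℓ,n}(x_n, t_n, θ) ≥ η · n^{1/ℓ}; consequently |(1/2π) ∫_{t_n < |θ| < π} e^{−q_{ℓ,n}(x_n,t_n,θ)} dθ| ≤ exp(−η · n^{1/ℓ}). -/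
open Filter Topology Real MeasureTheory Asymptotics

lemma aux_summable_pi (f : ℕ+ → ℝ) (hf : Summable f) (h0 : 0 ≤ f) (m : ℕ) :
    Summable (fun δ : Fin m → ℕ+ => ∏ i, f (δ i)) := by
  induction m with
  | zero => exact Summable.of_finite
  | succ k ih =>
    rw [← (Fin.consEquiv (fun _ : Fin (k+1) => ℕ+)).summable_iff]
    refine (hf.mul_of_nonneg ih h0 (fun δ => Finset.prod_nonneg (fun i _ => h0 _))).congr ?_
    intro p
    simp [Fin.consEquiv, Fin.prod_univ_succ]

lemma aux_geom (b : ℝ) (hb : 0 < b) :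
    Summable (fun a : ℕ+ => Real.exp (-((a : ℕ) : ℝ) * b)) ∧
    ∑' a : ℕ+, Real.exp (-((a : ℕ) : ℝ) * b) ≤ 1 / b := by
  have hr : Real.exp (-b) < 1 := by rw [Real.exp_lt_one_iff]; linarith
  have e : ∀ n : ℕ, Real.exp (-((n : ℕ) : ℝ) * b) = Real.exp (-b) ^ n := by
    intro n; rw [← Real.exp_nat_mul]; ring_nf
  have hs := hasSum_geometric_of_lt_one (Real.exp_pos _).le hr
  have hs2 := hs.mul_left (Real.exp (-b))
  constructor
  · rw [summable_pnat_iff_summable_nat (f := fun n : ℕ => Real.exp (-((n : ℕ) : ℝ) * b))]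
    simp_rw [e]; exact hs.summable
  · rw [tsum_pnat_eq_tsum_succ (f := fun n : ℕ => Real.exp (-((n : ℕ) : ℝ) * b))]
    simp_rw [e, pow_succ']
    rw [hs2.tsum_eq]
    rw [← div_eq_mul_inv, div_le_div_iff₀ (by linarith) hb]
    have := Real.add_one_le_exp b
    have h3 : Real.exp (-b) * Real.exp b = 1 := by rw [← Real.exp_add]; simp
    nlinarith [Real.exp_pos (-b)]

lemma aux_one (m : ℕ) (a : ℝ) (ha : 0 < a) :
    Summable (fun d : ℕ+ => ((d : ℕ) : ℝ) ^ m * Real.exp (-(((d : ℕ) : ℝ) * a))) ∧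
    ∑' d : ℕ+, ((d : ℕ) : ℝ) ^ m * Real.exp (-(((d : ℕ) : ℝ) * a)) ≤
      m.factorial * (2 / a) ^ (m + 1) := by
  obtain ⟨h1, h2⟩ := aux_geom (a / 2) (by positivity)
  have hb : ∀ d : ℕ+, ((d : ℕ) : ℝ) ^ m * Real.exp (-(((d : ℕ) : ℝ) * a)) ≤
      (m.factorial * (2 / a) ^ m) * Real.exp (-((d : ℕ) : ℝ) * (a / 2)) := by
    intro d
    have h := Real.pow_div_factorial_le_exp (((d : ℕ) : ℝ) * (a / 2)) (by positivity) m
    have hf : (0 : ℝ) < m.factorial := by positivity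
    rw [div_le_iff₀ hf] at h
    have e1 : Real.exp (-(((d : ℕ) : ℝ) * a)) =
      Real.exp (-((d : ℕ) : ℝ) * (a / 2)) * Real.exp (-((d : ℕ) : ℝ) * (a / 2)) := by
      rw [← Real.exp_add]; ring_nf
    have e2 : Real.exp (((d : ℕ) : ℝ) * (a / 2)) * Real.exp (-((d : ℕ) : ℝ) * (a / 2)) = 1 := by
      rw [← Real.exp_add]; simp
    have e3 : ((d : ℕ) : ℝ) ^ m = (((d : ℕ) : ℝ) * (a / 2)) ^ m * (2 / a) ^ m := by
      rw [← mul_pow]; congr 1; field_simp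
    rw [e1, e3]
    set E := Real.exp (-((d : ℕ) : ℝ) * (a / 2))
    calc _ ≤ (Real.exp (((d : ℕ) : ℝ) * (a / 2)) * m.factorial * (2 / a) ^ m) * (E * E) := by
          gcongr
      _ = m.factorial * (2 / a) ^ m * E * (Real.exp (((d : ℕ) : ℝ) * (a / 2)) * E) := by ring
      _ = _ := by rw [e2]; ring
  have hs : Summable (fun d : ℕ+ => ((d : ℕ) : ℝ) ^ m * Real.exp (-(((d : ℕ) : ℝ) * a))) :=
    Summable.of_nonneg_of_le (fun d => by positivity) hb (h1.mul_left _)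
  refine ⟨hs, (hs.tsum_le_tsum hb (h1.mul_left _)).trans ?_⟩
  rw [tsum_mul_left]
  calc _ ≤ (m.factorial * (2 / a) ^ m) * (1 / (a / 2)) := by gcongr
    _ = _ := by rw [pow_succ]; field_simp

/-- natural-power version of the staircase term -/
noncomputable def Fterm (m : ℕ) (t : ℝ) (δ : Fin (m + 1) → ℕ+) : ℝ :=
  (∏ i : Fin (m + 1), ((δ i : ℕ) : ℝ) ^ (m - (i : ℕ))) *
    Real.exp (-(∏ i, ((δ i : ℕ) : ℝ)) * t)

lemma Fterm_pos (m : ℕ) (t : ℝ) (δ : Fin (m + 1) → ℕ+) : 0 < Fterm m t δ := by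
  unfold Fterm
  have : ∀ i, (0 : ℝ) < ((δ i : ℕ) : ℝ) := fun i => by exact_mod_cast (δ i).pos
  exact mul_pos (Finset.prod_pos fun i _ => pow_pos (this i) _) (Real.exp_pos _)

lemma Fterm_bound (m : ℕ) : ∃ C > (0 : ℝ), ∀ t > (0 : ℝ), Summable (Fterm m t) ∧
    ∑' δ, Fterm m t δ ≤ C * (1 / t) ^ (m + 1) := by
  have hsq : Summable (fun d : ℕ+ => 1 / ((d : ℕ) : ℝ) ^ 2) := by
    rw [summable_pnat_iff_summable_nat (f := fun n : ℕ => 1 / (n : ℝ) ^ 2)]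
    exact Real.summable_one_div_nat_pow.2 (by norm_num)
  have hpi := aux_summable_pi _ hsq (fun d => by positivity) m
  set S := ∑' δ : Fin m → ℕ+, ∏ i, 1 / ((δ i : ℕ) : ℝ) ^ 2 with hS
  have hS0 : 0 ≤ S := tsum_nonneg fun δ => Finset.prod_nonneg fun i _ => by positivity
  refine ⟨m.factorial * 2 ^ (m + 1) * S + 1, by positivity, fun t ht => ?_⟩
  let e : (Fin m → ℕ+) × ℕ+ ≃ (Fin (m + 1) → ℕ+) :=
    (Equiv.prodComm _ _).trans (Fin.consEquiv (fun _ : Fin (m+1) => ℕ+))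
  have he : ∀ δ a, Fterm m t (e (δ, a)) = (∏ j : Fin m, ((δ j : ℕ) : ℝ) ^ (m - 1 - (j : ℕ))) *
      (((a : ℕ) : ℝ) ^ m * Real.exp (-(((a : ℕ) : ℝ) * ((∏ j, ((δ j : ℕ) : ℝ)) * t)))) := by
    intro δ a
    have h1 : ∀ j : Fin m, m - ((j : ℕ) + 1) = m - 1 - (j : ℕ) := by intro j; omega
    have h2 : e (δ, a) = Fin.cons a δ := rfl
    rw [h2]
    simp only [Fterm, Fin.prod_univ_succ, Fin.cons_zero, Fin.cons_succ, Fin.val_succ, Fin.val_zero,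
      Nat.sub_zero, h1]
    rw [show -(((a : ℕ) : ℝ) * ∏ j, ((δ j : ℕ) : ℝ)) * t =
      -(((a : ℕ) : ℝ) * ((∏ j, ((δ j : ℕ) : ℝ)) * t)) by ring]
    ring
  have hin : ∀ δ : Fin m → ℕ+, Summable (fun a => Fterm m t (e (δ, a))) ∧
      ∑' a, Fterm m t (e (δ, a)) ≤
        (m.factorial * 2 ^ (m + 1) * (1 / t) ^ (m + 1)) * ∏ i, 1 / ((δ i : ℕ) : ℝ) ^ 2 := by
    intro δ
    have hd : ∀ j, (1 : ℝ) ≤ ((δ j : ℕ) : ℝ) := fun j => by exact_mod_cast (δ j).pos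
    have hP : 0 < ∏ j, ((δ j : ℕ) : ℝ) := Finset.prod_pos fun j _ => by linarith [hd j]
    obtain ⟨h1, h2⟩ := aux_one m ((∏ j, ((δ j : ℕ) : ℝ)) * t) (by positivity)
    simp_rw [he]
    refine ⟨h1.mul_left _, ?_⟩
    rw [tsum_mul_left]
    have hnn : 0 ≤ ∏ j : Fin m, ((δ j : ℕ) : ℝ) ^ (m - 1 - (j : ℕ)) :=
      Finset.prod_nonneg fun i _ => by positivity
    refine (mul_le_mul_of_nonneg_left h2 hnn).trans ?_
    have e1 : (2 / ((∏ j, ((δ j : ℕ) : ℝ)) * t)) ^ (m + 1) =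
      2 ^ (m + 1) * (1 / t) ^ (m + 1) * ∏ j, (1 / ((δ j : ℕ) : ℝ) ^ (m + 1)) := by
      rw [Finset.prod_div_distrib, Finset.prod_pow]
      simp only [Finset.prod_const_one, div_pow, mul_pow, one_pow]
      field_simp
    rw [e1]
    have e2 : (∏ j : Fin m, ((δ j : ℕ) : ℝ) ^ (m - 1 - (j : ℕ))) *
      (∏ j, (1 / ((δ j : ℕ) : ℝ) ^ (m + 1))) ≤ ∏ i, 1 / ((δ i : ℕ) : ℝ) ^ 2 := by
      rw [← Finset.prod_mul_distrib]
      refine Finset.prod_le_prod (fun i _ => by positivity) (fun j _ => ?_)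
      have hj := hd j
      have hj0 : 0 < ((δ j : ℕ) : ℝ) := by linarith
      rw [mul_one_div, div_le_div_iff₀ (by positivity) (by positivity), one_mul, ← pow_add]
      exact pow_le_pow_right₀ hj (by have := j.2; omega)
    calc _ = (m.factorial * 2 ^ (m + 1) * (1 / t) ^ (m + 1)) *
        ((∏ j : Fin m, ((δ j : ℕ) : ℝ) ^ (m - 1 - (j : ℕ))) *
      (∏ j, (1 / ((δ j : ℕ) : ℝ) ^ (m + 1)))) := by ring
      _ ≤ _ := by gcongr
  have hout : Summable (fun δ => ∑' a, Fterm m t (e (δ, a))) :=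
    Summable.of_nonneg_of_le (fun δ => tsum_nonneg fun a => (Fterm_pos _ _ _).le)
      (fun δ => (hin δ).2) (hpi.mul_left _)
  have hsum : Summable (fun p => Fterm m t (e p)) :=
    (summable_prod_of_nonneg (fun p => (Fterm_pos _ _ _).le)).2 ⟨fun δ => (hin δ).1, hout⟩
  refine ⟨e.summable_iff.1 hsum, ?_⟩
  rw [← e.tsum_eq, hsum.tsum_prod]
  refine (hout.tsum_le_tsum (fun δ => (hin δ).2) (hpi.mul_left _)).trans ?_
  rw [tsum_mul_left, ← hS]
  have : 0 < (1 / t) ^ (m + 1) := by positivity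
  nlinarith

lemma Zstair_eq_s18 (m : ℕ) (t : ℝ) : Zstair (m + 1) ((m + 1 : ℕ) : ℤ) t = ∑' δ, Fterm m t δ := by
  unfold Zstair Zr Fterm
  refine tsum_congr fun δ => ?_
  congr 1
  refine Finset.prod_congr rfl fun i _ => ?_
  rw [← Real.rpow_natCast, Nat.cast_sub (by have := i.2; omega)]
  congr 1
  push_cast; ring

lemma aux_cos_sum (t θ : ℝ) (ht : 0 < t) (ht1 : t ≤ 1) (h1 : t < |θ|) (h2 : |θ| < π) :
    1 / (21 * t) ≤ ∑' a : ℕ+, Real.exp (-(((a : ℕ) : ℝ) * t)) * (1 - Real.cos (((a : ℕ) : ℝ) * θ)) := by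
  set r := Real.exp (-t) with hr
  have hr0 : 0 < r := Real.exp_pos _
  have hr1 : r < 1 := by rw [hr, Real.exp_lt_one_iff]; linarith
  set c := Real.cos θ with hc
  set z : ℂ := Complex.exp ((-t : ℝ) + θ * Complex.I) with hz
  have hzre : z.re = r * c := by
    rw [hz, Complex.exp_re]; simp [hr, hc]
  have hzim : z.im = r * Real.sin θ := by
    rw [hz, Complex.exp_im]; simp [hr]
  have hzn : ‖z‖ < 1 := by
    rw [hz, Complex.norm_exp]; simp; exact ht
  have hs1 := hasSum_geometric_of_lt_one hr0.le hr1
  have hs2 := Complex.hasSum_re (hasSum_geometric_of_norm_lt_one hzn)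
  have hs := hs1.sub hs2
  have hterm : ∀ n : ℕ, Real.exp (-((n : ℝ) * t)) * (1 - Real.cos ((n : ℝ) * θ)) =
      r ^ n - (z ^ n).re := by
    intro n
    have e1 : r ^ n = Real.exp (-((n : ℝ) * t)) := by
      rw [hr, ← Real.exp_nat_mul]; ring_nf
    have e2 : (z ^ n).re = Real.exp (-((n : ℝ) * t)) * Real.cos ((n : ℝ) * θ) := by
      rw [hz, ← Complex.exp_nat_mul, Complex.exp_re]; simp
    rw [e1, e2]; ring
  have hs' : HasSum (fun n : ℕ => Real.exp (-((n : ℝ) * t)) * (1 - Real.cos ((n : ℝ) * θ)))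
      ((1 - r)⁻¹ - ((1 - z)⁻¹).re) := by
    simp_rw [hterm]; exact hs
  rw [tsum_pnat_eq_tsum_succ
    (f := fun n : ℕ => Real.exp (-((n : ℝ) * t)) * (1 - Real.cos ((n : ℝ) * θ)))]
  have h0 := hs'.summable.tsum_eq_zero_add
  simp only [Nat.cast_zero, zero_mul, Real.cos_zero, sub_self, mul_zero, zero_add] at h0
  rw [← h0, hs'.tsum_eq]
  have hD : Complex.normSq (1 - z) = (1 - r) ^ 2 + 2 * r * (1 - c) := by
    rw [Complex.normSq_apply]
    simp only [Complex.sub_re, Complex.sub_im, Complex.one_re, Complex.one_im, hzre, hzim]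
    have := Real.sin_sq_add_cos_sq θ
    rw [← hc] at this
    linear_combination r ^ 2 * this
  rw [Complex.inv_re, hD]
  simp only [Complex.sub_re, Complex.one_re, hzre]
  have hcc : c ≤ 1 - 2 / π ^ 2 * θ ^ 2 := Real.cos_le_one_sub_mul_cos_sq h2.le
  have hθ : t ^ 2 ≤ θ ^ 2 := by rw [← sq_abs θ]; gcongr
  have hpi : π ^ 2 ≤ 10 := by nlinarith [Real.pi_lt_d2, Real.pi_gt_three]
  have hc1 : t ^ 2 ≤ 5 * (1 - c) := by
    have : (1 : ℝ) / 5 ≤ 2 / π ^ 2 := by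
      rw [div_le_div_iff₀ (by norm_num) (by positivity)]; linarith
    nlinarith [sq_nonneg θ]
  have hcpos : 0 < 1 - c := by nlinarith
  have hrt : 1 - r ≤ t := by linarith [Real.add_one_le_exp (-t)]
  have hr3 : 1 / 3 ≤ r := by
    have h : Real.exp (-1) ≤ r := Real.exp_le_exp.2 (by linarith)
    have h3 : Real.exp 1 < 3 := by linarith [Real.exp_one_lt_d9]
    rw [Real.exp_neg] at h
    have : (3 : ℝ)⁻¹ ≤ (Real.exp 1)⁻¹ := inv_anti₀ (Real.exp_pos _) h3.le
    linarith
  have hDpos : 0 < (1 - r) ^ 2 + 2 * r * (1 - c) := by positivity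
  have hDle : (1 - r) ^ 2 + 2 * r * (1 - c) ≤ 7 * (1 - c) := by nlinarith
  have h1r : 0 < 1 - r := by linarith
  have key : (1 - r)⁻¹ - (1 - r * c) / ((1 - r) ^ 2 + 2 * r * (1 - c)) =
      r * (1 + r) * (1 - c) / ((1 - r) * ((1 - r) ^ 2 + 2 * r * (1 - c))) := by
    field_simp
    ring
  rw [key, div_le_div_iff₀ (by positivity) (by positivity)]
  have a1 : (1 - r) * ((1 - r) ^ 2 + 2 * r * (1 - c)) ≤ t * (7 * (1 - c)) := by gcongr
  have a2 : (1 - c) * t / 3 ≤ r * (1 + r) * (1 - c) * t := by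
    have : 1 / 3 ≤ r * (1 + r) := by nlinarith
    have h : 0 < (1 - c) * t := by positivity
    nlinarith
  nlinarith

lemma q_re_bound (k n : ℕ) (y u θ : ℝ) (hy : 0 < y) (hu : 0 < u) (hu1 : u ≤ 1)
    (h1 : u < |θ|) (h2 : |θ| < π) :
    y * (1 / (21 * u)) ≤ (qfun (k + 2) n y u θ).re := by
  obtain ⟨C, -, hC⟩ := Fterm_bound (k + 1)
  have hsF := (hC u hu).1
  let W : (Fin (k + 2) → ℕ+) → ℝ := fun δ =>
    ∏ i, ((δ i : ℕ) : ℝ) ^ (((k + 2 : ℕ) : ℤ) - 2 - (i : ℕ))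
  let P : (Fin (k + 2) → ℕ+) → ℝ := fun δ => ∏ i, ((δ i : ℕ) : ℝ)
  have hd : ∀ (δ : Fin (k + 2) → ℕ+) j, (1 : ℝ) ≤ ((δ j : ℕ) : ℝ) :=
    fun δ j => by exact_mod_cast (δ j).pos
  have hW0 : ∀ δ, 0 ≤ W δ := fun δ => Finset.prod_nonneg fun i _ => by positivity
  have hWF : ∀ δ, W δ * Real.exp (-(P δ * u)) ≤ Fterm (k + 1) u δ := by
    intro δ
    unfold Fterm
    rw [show -(∏ i, ((δ i : ℕ) : ℝ)) * u = -(P δ * u) by simp [P]]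
    gcongr
    refine Finset.prod_le_prod (fun i _ => by positivity) fun i _ => ?_
    rw [← zpow_natCast]
    refine zpow_le_zpow_right₀ (hd δ i) ?_
    have := i.2
    push_cast
    omega
  let T : (Fin (k + 2) → ℕ+) → ℂ := fun δ =>
    (∏ i, ((δ i : ℕ) : ℂ) ^ (((k + 2 : ℕ) : ℤ) - 2 - (i : ℕ))) *
      Complex.exp (-(((∏ i, ((δ i : ℕ) : ℝ)) * u : ℝ) : ℂ)) *
      (Complex.exp (Complex.I * (((∏ i, ((δ i : ℕ) : ℝ)) * θ : ℝ) : ℂ)) - 1)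
  have hT : ∀ δ, T δ = ((W δ * Real.exp (-(P δ * u)) : ℝ) : ℂ) *
      (Complex.exp (Complex.I * ((P δ * θ : ℝ) : ℂ)) - 1) := by
    intro δ
    simp only [T, W, P]
    push_cast
    rfl
  have hTn : ∀ δ, ‖T δ‖ ≤ 2 * Fterm (k + 1) u δ := by
    intro δ
    rw [hT, norm_mul, Complex.norm_real, Real.norm_of_nonneg
      (mul_nonneg (hW0 δ) (Real.exp_pos _).le)]
    have : ‖Complex.exp (Complex.I * ((P δ * θ : ℝ) : ℂ)) - 1‖ ≤ 2 := by
      refine (norm_sub_le _ _).trans ?_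
      rw [mul_comm, Complex.norm_exp_ofReal_mul_I]; norm_num
    have h3 := hWF δ
    have h4 := mul_nonneg (hW0 δ) (Real.exp_pos (-(P δ * u))).le
    nlinarith [norm_nonneg (Complex.exp (Complex.I * ((P δ * θ : ℝ) : ℂ)) - 1)]
  have hTs : Summable T := Summable.of_norm_bounded (hsF.mul_left 2) hTn
  have hTre : ∀ δ, (T δ).re = -(W δ * Real.exp (-(P δ * u)) * (1 - Real.cos (P δ * θ))) := by
    intro δ
    rw [hT, Complex.re_ofReal_mul, Complex.sub_re, mul_comm Complex.I,
      Complex.exp_ofReal_mul_I_re, Complex.one_re]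
    ring
  have hq : (qfun (k + 2) n y u θ).re =
      y * ∑' δ, W δ * Real.exp (-(P δ * u)) * (1 - Real.cos (P δ * θ)) := by
    have : qfun (k + 2) n y u θ = Complex.I * (n : ℂ) * (θ : ℂ) - (y : ℂ) * ∑' δ, T δ := rfl
    rw [this, Complex.sub_re, Complex.re_ofReal_mul, Complex.re_tsum hTs]
    simp_rw [hTre]
    rw [tsum_neg]
    simp
  rw [hq]
  gcongr
  set g : (Fin (k + 2) → ℕ+) → ℝ :=
    fun δ => W δ * Real.exp (-(P δ * u)) * (1 - Real.cos (P δ * θ)) with hg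
  have hgs : Summable g := by
    have := (Complex.hasSum_re hTs.hasSum).summable.neg
    refine this.congr fun δ => ?_
    rw [hTre]; simp [g]
  have hg0 : ∀ δ, 0 ≤ g δ := fun δ =>
    mul_nonneg (mul_nonneg (hW0 δ) (Real.exp_pos _).le) (by linarith [Real.cos_le_one (P δ * θ)])
  let ι : ℕ+ → (Fin (k + 2) → ℕ+) := fun a => Fin.cons a (fun _ : Fin (k + 1) => (1 : ℕ+))
  have hι : Function.Injective ι := by
    intro a b hab
    have := congrFun hab 0
    simpa [ι] using this
  have hsub : ∑' a, g (ι a) ≤ ∑' δ, g δ := tsum_comp_le_tsum_of_inj hgs hg0 hι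
  refine le_trans ?_ hsub
  have hgi : ∀ a : ℕ+, Real.exp (-(((a : ℕ) : ℝ) * u)) * (1 - Real.cos (((a : ℕ) : ℝ) * θ)) ≤
      g (ι a) := by
    intro a
    have hP : P (ι a) = ((a : ℕ) : ℝ) := by
      simp [P, ι, Fin.prod_univ_succ]
    have hWa : 1 ≤ W (ι a) := by
      have ha : (1 : ℝ) ≤ ((a : ℕ) : ℝ) := by exact_mod_cast a.pos
      simp only [W, ι, Fin.prod_univ_succ, Fin.cons_zero, Fin.cons_succ]
      simp
      exact one_le_pow₀ ha
    simp only [hg, hP]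
    have h3 : 0 ≤ Real.exp (-(((a : ℕ) : ℝ) * u)) * (1 - Real.cos (((a : ℕ) : ℝ) * θ)) :=
      mul_nonneg (Real.exp_pos _).le (by linarith [Real.cos_le_one (((a : ℕ) : ℝ) * θ)])
    nlinarith
  have hgis : Summable (fun a => g (ι a)) := hgs.comp_injective hι
  refine (aux_cos_sum u θ hu hu1 h1 h2).trans ?_
  refine Summable.tsum_le_tsum hgi (Summable.of_nonneg_of_le (fun a => ?_) hgi hgis) hgis
  exact mul_nonneg (Real.exp_pos _).le (by linarith [Real.cos_le_one (((a : ℕ) : ℝ) * θ)])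

lemma Zstair_surj (m : ℕ) (v : ℝ) (hv : 0 < v) :
    ∃ t ∈ Set.Ioi (0 : ℝ), Zstair (m + 1) ((m + 1 : ℕ) : ℤ) t = v := by
  obtain ⟨C, hC0, hC⟩ := Fterm_bound m
  have hcont : ContinuousOn (fun t => ∑' δ, Fterm m t δ) (Set.Ioi 0) := by
    intro t ht
    have ht' : 0 < t := ht
    have : ContinuousOn (fun t => ∑' δ, Fterm m t δ) (Set.Ici (t / 2)) := by
      refine continuousOn_tsum (u := Fterm m (t / 2)) (fun δ => ?_) (hC (t / 2) (by positivity)).1 ?_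
      · unfold Fterm; fun_prop
      · intro δ w hw
        rw [Real.norm_of_nonneg (Fterm_pos _ _ _).le]
        unfold Fterm
        have hw' : t / 2 ≤ w := hw
        have hP : 0 ≤ ∏ i, ((δ i : ℕ) : ℝ) := Finset.prod_nonneg fun i _ => by positivity
        have hP2 : 0 ≤ ∏ i : Fin (m + 1), ((δ i : ℕ) : ℝ) ^ (m - (i : ℕ)) :=
          Finset.prod_nonneg fun i _ => by positivity
        refine mul_le_mul_of_nonneg_left (Real.exp_le_exp.2 ?_) hP2
        nlinarith
    exact (this.continuousAt (Ici_mem_nhds (by linarith))).continuousWithinAt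
  -- large values near zero
  have hbig : ∃ t > (0 : ℝ), v ≤ ∑' δ, Fterm m t δ := by
    obtain ⟨N, hN⟩ := exists_nat_ge (3 * v)
    have hN0 : (0 : ℝ) < N := by linarith
    refine ⟨1 / N, by positivity, ?_⟩
    have hs := (hC (1 / N) (by positivity)).1
    let ι : ℕ → (Fin (m + 1) → ℕ+) := fun a => Fin.cons a.succPNat (fun _ : Fin m => (1 : ℕ+))
    have hι : Function.Injective ι := by
      intro a b hab
      have := congrFun hab 0
      simpa [ι] using this
    have h1 : ∑' a, Fterm m (1 / N) (ι a) ≤ ∑' δ, Fterm m (1 / N) δ :=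
      tsum_comp_le_tsum_of_inj hs (fun δ => (Fterm_pos _ _ _).le) hι
    have h2 : ∑ a ∈ Finset.range N, Fterm m (1 / N) (ι a) ≤ ∑' a, Fterm m (1 / N) (ι a) :=
      (hs.comp_injective hι).sum_le_tsum _ (fun a _ => (Fterm_pos _ _ _).le)
    have h3 : ∀ a ∈ Finset.range N, (1 / 3 : ℝ) ≤ Fterm m (1 / N) (ι a) := by
      intro a ha
      have haN : (a : ℝ) + 1 ≤ N := by
        have := Finset.mem_range.1 ha
        exact_mod_cast this
      have : Fterm m (1 / N) (ι a) = ((a : ℝ) + 1) ^ m * Real.exp (-((a : ℝ) + 1) * (1 / N)) := by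
        simp only [Fterm, ι, Fin.prod_univ_succ, Fin.cons_zero, Fin.cons_succ]
        simp
      rw [this]
      have e1 : (1 : ℝ) ≤ ((a : ℝ) + 1) ^ m := one_le_pow₀ (by linarith [(Nat.cast_nonneg a : (0:ℝ) ≤ a)])
      have e2 : Real.exp (-1) ≤ Real.exp (-((a : ℝ) + 1) * (1 / N)) := by
        apply Real.exp_le_exp.2
        rw [mul_one_div, le_div_iff₀ hN0]; linarith
      have e3 : (1 / 3 : ℝ) ≤ Real.exp (-1) := by
        have h3 : Real.exp 1 < 3 := by linarith [Real.exp_one_lt_d9]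
        rw [Real.exp_neg, one_div]
        exact inv_anti₀ (Real.exp_pos _) h3.le
      nlinarith [Real.exp_pos (-1)]
    have h4 := Finset.card_nsmul_le_sum _ _ _ h3
    rw [Finset.card_range, nsmul_eq_mul] at h4
    linarith
  have hsmall : ∃ t > (0 : ℝ), ∑' δ, Fterm m t δ ≤ v := by
    refine ⟨C / v + 1, by positivity, ((hC (C / v + 1) (by positivity)).2).trans ?_⟩
    have e1 : 1 / (C / v + 1) ≤ 1 := by
      rw [div_le_one (by positivity)]; linarith [div_pos hC0 hv]
    have e2 : (1 / (C / v + 1)) ^ (m + 1) ≤ 1 / (C / v + 1) := by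
      exact pow_le_of_le_one (by positivity) e1 (by omega)
    refine (mul_le_mul_of_nonneg_left e2 hC0.le).trans ?_
    rw [mul_one_div, div_le_iff₀ (by positivity)]
    have : v * (C / v + 1) = C + v := by field_simp
    linarith
  obtain ⟨a, ha, hav⟩ := hbig
  obtain ⟨b, hb, hbv⟩ := hsmall
  have := isPreconnected_Ioi.intermediate_value (Set.mem_Ioi.2 hb) (Set.mem_Ioi.2 ha) hcont ⟨hbv, hav⟩
  obtain ⟨t, ht, htv⟩ := this
  exact ⟨t, ht, by rw [Zstair_eq_s18]; exact htv⟩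

lemma xseq_lower (ℓ : ℕ) (hℓ : 2 ≤ ℓ) (x s : ℝ) (hx : 0 < x) :
    ∀ᶠ n : ℕ in atTop, x / 3 ≤ xseq ℓ x s n := by
  have hp : (0 : ℝ) < ((ℓ : ℝ) - 1) / (2 * (ℓ : ℝ)) := by
    have : (2 : ℝ) ≤ ℓ := by exact_mod_cast hℓ
    apply div_pos <;> linarith
  have h1 : Tendsto (fun n : ℕ => (n : ℝ) ^ (((ℓ : ℝ) - 1) / (2 * (ℓ : ℝ)))) atTop atTop :=
    (tendsto_rpow_atTop hp).comp tendsto_natCast_atTop_atTop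
  have h2 : Tendsto (fun n : ℕ => s / bseq ℓ x n) atTop (𝓝 0) := by
    unfold bseq
    generalize (x * Kconst ℓ) ^ ((1 : ℝ) / (2 * (ℓ : ℝ))) /
      Real.sqrt ((ℓ : ℝ) * ((ℓ : ℝ) - 1)) = c
    have h3 : Tendsto (fun n : ℕ => (s / c) / (n : ℝ) ^ (((ℓ : ℝ) - 1) / (2 * (ℓ : ℝ))))
      atTop (𝓝 0) := Tendsto.div_atTop tendsto_const_nhds h1
    exact h3.congr fun n => div_div _ _ _
  filter_upwards [h2.eventually (lt_mem_nhds (show (-1 : ℝ) < 0 by norm_num))] with n hn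
  unfold xseq
  have e2 : Real.exp (-1) ≤ Real.exp (s / bseq ℓ x n) := Real.exp_le_exp.2 hn.le
  have e3 : (1 / 3 : ℝ) ≤ Real.exp (-1) := by
    have h3 : Real.exp 1 < 3 := by linarith [Real.exp_one_lt_d9]
    rw [Real.exp_neg, one_div]
    exact inv_anti₀ (Real.exp_pos _) h3.le
  nlinarith


/-- minor arc estimate. There is `η > 0` such that for all sufficiently large
`n` (in particular `t_n < π`) and all `t_n < |θ| < π`, `Re q_{ℓ,n}(x_n,t_n,θ) ≥ η n^{1/ℓ}`;
consequently the minor arc integral is at most `exp(-η n^{1/ℓ})` in modulus. -/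
theorem minor_arc_bound (ℓ : ℕ) (hℓ : 2 ≤ ℓ) (x s : ℝ) (hx : 0 < x) :
    ∃ η > (0 : ℝ), ∀ᶠ n : ℕ in atTop,
      tseq ℓ x n < π ∧
      (∀ θ : ℝ, tseq ℓ x n < |θ| → |θ| < π →
        η * (n : ℝ) ^ ((1 : ℝ) / (ℓ : ℝ)) ≤
          (qfun ℓ n (xseq ℓ x s n) (tseq ℓ x n) θ).re) ∧
      ‖((1 / (2 * π) : ℝ) : ℂ) *
          ∫ θ in {θ : ℝ | tseq ℓ x n < |θ| ∧ |θ| < π},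
            Complex.exp (-qfun ℓ n (xseq ℓ x s n) (tseq ℓ x n) θ)‖ ≤
        Real.exp (-η * (n : ℝ) ^ ((1 : ℝ) / (ℓ : ℝ))) := by 
  obtain ⟨k, rfl⟩ : ∃ k, ℓ = k + 2 := ⟨ℓ - 2, by omega⟩
  obtain ⟨C, hC0, hC⟩ := Fterm_bound (k + 1)
  have hL : (0 : ℝ) < ((k + 2 : ℕ) : ℝ) := by positivity
  set D : ℝ := (x * C) ^ ((1 : ℝ) / ((k + 2 : ℕ) : ℝ)) with hD
  have hD0 : 0 < D := by positivity
  have hlarge : Tendsto (fun n : ℕ => (n : ℝ) ^ ((1 : ℝ) / ((k + 2 : ℕ) : ℝ))) atTop atTop :=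
    (tendsto_rpow_atTop (by positivity)).comp tendsto_natCast_atTop_atTop
  refine ⟨x / (63 * D), by positivity, ?_⟩
  filter_upwards [xseq_lower (k + 2) hℓ x s hx, hlarge.eventually_ge_atTop D,
    eventually_ge_atTop 1] with n hxn hn hn1
  have hnpos : (0 : ℝ) < n := by exact_mod_cast hn1
  have hex := Zstair_surj (k + 1) ((n : ℝ) / x) (by positivity)
  have ht0 : 0 < tseq (k + 2) x n := Function.invFunOn_mem hex
  have htz : Zstair (k + 2) ((k + 2 : ℕ) : ℤ) (tseq (k + 2) x n) = (n : ℝ) / x :=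
    Function.invFunOn_eq hex
  set t := tseq (k + 2) x n with ht
  set R : ℝ := (n : ℝ) ^ ((1 : ℝ) / ((k + 2 : ℕ) : ℝ)) with hR
  have hle : (n : ℝ) / x ≤ C * (1 / t) ^ (k + 2) := by
    rw [← htz, Zstair_eq_s18 (k + 1)]
    exact (hC t ht0).2
  have hRt : R ≤ D / t := by
    have e1 : (n : ℝ) ≤ (x * C) * (1 / t) ^ (k + 2) := by
      rw [div_le_iff₀ hx] at hle; linarith
    have e2 : R ≤ ((x * C) * (1 / t) ^ (k + 2)) ^ ((1 : ℝ) / ((k + 2 : ℕ) : ℝ)) :=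
      Real.rpow_le_rpow hnpos.le e1 (by positivity)
    rw [Real.mul_rpow (by positivity) (by positivity), one_div ((k + 2 : ℕ) : ℝ),
      Real.pow_rpow_inv_natCast (by positivity) (by omega), ← one_div ((k + 2 : ℕ) : ℝ),
      mul_one_div] at e2
    exact e2
  have ht1 : t ≤ 1 := by
    have := hn.trans hRt
    rw [le_div_iff₀ ht0] at this
    nlinarith
  have hre : ∀ θ : ℝ, t < |θ| → |θ| < π →
      x / (63 * D) * R ≤ (qfun (k + 2) n (xseq (k + 2) x s n) t θ).re := by
    intro θ h1 h2
    have hxpos : 0 < xseq (k + 2) x s n := by linarith [div_pos hx (show (0:ℝ) < 3 by norm_num)]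
    refine le_trans ?_ (q_re_bound k n _ t θ hxpos ht0 ht1 h1 h2)
    calc x / (63 * D) * R ≤ x / (63 * D) * (D / t) := by gcongr
      _ = x / 3 * (1 / (21 * t)) := by field_simp; norm_num
      _ ≤ _ := by gcongr
  refine ⟨by linarith [Real.pi_gt_three], hre, ?_⟩
  have hsub : {θ : ℝ | t < |θ| ∧ |θ| < π} ⊆ Set.Ioo (-π) π := fun θ hθ => abs_lt.1 hθ.2
  have hvol : volume (Set.Ioo (-π) π) < ⊤ := by simp
  have hI := norm_setIntegral_le_of_norm_le_const (μ := volume)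
    (s := {θ : ℝ | t < |θ| ∧ |θ| < π})
    (f := fun θ => Complex.exp (-qfun (k + 2) n (xseq (k + 2) x s n) t θ))
    (C := Real.exp (-(x / (63 * D)) * R)) ((measure_mono hsub).trans_lt hvol) (by
      intro θ hθ
      rw [Complex.norm_exp]
      apply Real.exp_le_exp.2
      rw [Complex.neg_re]
      linarith [hre θ hθ.1 hθ.2])
  have hm : volume.real {θ : ℝ | t < |θ| ∧ |θ| < π} ≤ 2 * π := by
    refine (measureReal_mono hsub hvol.ne).trans ?_
    rw [Real.volume_real_Ioo_of_le (by linarith [Real.pi_pos])]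
    linarith
  rw [norm_mul, Complex.norm_real, Real.norm_of_nonneg (by positivity)]
  calc _ ≤ 1 / (2 * π) * (Real.exp (-(x / (63 * D)) * R) * (2 * π)) := by
        gcongr
        exact hI.trans (by gcongr)
    _ = _ := by field_simp
end
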